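/- A Banach space X has property (B_f) if and only if X is reflexive. -/

import Mathlib

open Metric Filter
open scoped Topology

/-!
If `X` is reflexive, closed subspaces are proximinal, so a vector whose distance to `Y (n + 1)` is
at most `e n` can be moved within `Y (n + 1)`, without affecting its distance to that or any larger
subspace, until its distance to `Y n` is `e n`; doing so for `n = N, …, 0`, starting from the zero
vector, realizes the prescribed distances.

Conversely, applying (B_f) with all distances equal to `1` to a chain `0 < ker p < W < Z 1 < ⋯`
yields a unit vector of `W` at distance `1` from `ker p`, at which the functional `p` on `W` attains
its norm. If `X` is not reflexive, James' triangular system of functionals `f n` and vectors `x k`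
contradicts this: take for `W` the closed span of the `x k` with `k` even, the odd ones leaving room
for the rest of the chain. On `W` the `f n` tend to `0` pointwise while their convex hull stays away
from `0`, and this produces a functional on `W` that does not attain its norm.
-/

section NearMinimization

theorem hasSum_smul_mem_of_convex {ι V : Type*} [AddCommGroup V] [Module ℝ V] [TopologicalSpace V]
    [ContinuousSMul ℝ V] {K : Set V} (hconv : Convex ℝ K) (hclosed : IsClosed K) {w : ι → ℝ}
    {z : ι → V} {s : V} (hw₀ : ∀ i, 0 ≤ w i) (hw : HasSum w 1) (hz : ∀ i, z i ∈ K)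
    (hs : HasSum (fun i ↦ w i • z i) s) : s ∈ K := by
  have hlim : Tendsto (fun t : Finset ι ↦ t.centerMass w z) atTop (𝓝 s) := by
    simpa [Finset.centerMass] using (Tendsto.inv₀ hw one_ne_zero).smul hs
  refine hclosed.mem_of_tendsto hlim ?_
  filter_upwards [hw.eventually_const_lt one_pos] with t ht
  exact hconv.centerMass_mem (fun i _ ↦ hw₀ i) ht fun i _ ↦ hz i

theorem exists_seq_norm_sum_add_smul_le {V : Type*} [SeminormedAddCommGroup V] [NormedSpace ℝ V]
    (K : ℕ → Set V) (hK : ∀ n, (K n).Nonempty) (a b ε : ℕ → ℝ) (hε : ∀ n, 0 < ε n) :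
    ∃ g : ℕ → V, (∀ n, g n ∈ K n) ∧ ∀ n, ∀ h ∈ K n,
      ‖∑ k ∈ Finset.range n, a k • g k + b n • g n‖ ≤
        ‖∑ k ∈ Finset.range n, a k • g k + b n • h‖ + ε n := by
  have near_min (n : ℕ) (u : V) :
      ∃ g ∈ K n, ∀ h ∈ K n, ‖u + b n • g‖ ≤ ‖u + b n • h‖ + ε n := by
    obtain ⟨_, ⟨g, hg, rfl⟩, hlt⟩ := exists_lt_of_csInf_lt
      ((hK n).image fun h ↦ ‖u + b n • h‖) (lt_add_of_pos_right _ (hε n))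
    refine ⟨g, hg, fun h hh ↦ hlt.le.trans ?_⟩
    gcongr
    exact csInf_le ⟨0, by rintro _ ⟨_, _, rfl⟩; exact norm_nonneg _⟩ ⟨h, hh, rfl⟩
  choose m hm hmin using near_min
  let u : ℕ → V := fun n ↦ Nat.rec 0 (fun k u ↦ u + a k • m k u) n
  have hu (n : ℕ) : ∑ k ∈ Finset.range n, a k • m k (u k) = u n := by
    induction n with
    | zero => rfl
    | succ n ih => rw [Finset.sum_range_succ, ih]
  refine ⟨fun n ↦ m n (u n), fun n ↦ hm n _, fun n h hh ↦ ?_⟩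
  simpa only [hu] using hmin n (u n) h hh

theorem hasSum_one_half_pow_succ : HasSum (fun k : ℕ ↦ (1 / 2 : ℝ) ^ (k + 1)) 1 := by
  convert hasSum_geometric_two' 1 using 2 with k
  rw [one_div_pow, pow_succ', div_div]

variable {V : Type*} [NormedAddCommGroup V] [NormedSpace ℝ V] [CompleteSpace V] {K : ℕ → Set V}

theorem exists_eq_sum_add_smul_of_antitone (hclosed : ∀ n, IsClosed (K n))
    (hconv : ∀ n, Convex ℝ (K n)) (hanti : Antitone K) (hbdd : Bornology.IsBounded (K 0))
    {g : ℕ → V} (hg : ∀ n, g n ∈ K n) :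
    ∃ f, ∀ n, ∃ t ∈ K n,
      f = ∑ k ∈ Finset.range n, (1 / 2 : ℝ) ^ (k + 1) • g k + (1 / 2 : ℝ) ^ n • t := by
  obtain ⟨M, hM⟩ := hbdd.exists_norm_le
  have summable_tail (n : ℕ) : Summable fun k ↦ (1 / 2 : ℝ) ^ (k + 1) • g (k + n) := by
    refine .of_norm_bounded (hasSum_one_half_pow_succ.summable.mul_right M) fun k ↦ ?_
    rw [norm_smul, Real.norm_of_nonneg (by positivity)]
    gcongr
    exact hM _ (hanti (Nat.zero_le _) (hg _))
  refine ⟨∑' k, (1 / 2 : ℝ) ^ (k + 1) • g k, fun n ↦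
    ⟨∑' k, (1 / 2 : ℝ) ^ (k + 1) • g (k + n), ?_, ?_⟩⟩
  · exact hasSum_smul_mem_of_convex (hconv n) (hclosed n) (fun _ ↦ by positivity)
      hasSum_one_half_pow_succ (fun k ↦ hanti (Nat.le_add_left n k) (hg _)) (summable_tail n).hasSum
  · have summable_series : Summable fun k ↦ (1 / 2 : ℝ) ^ (k + 1) • g k := summable_tail 0
    rw [← (summable_tail n).tsum_const_smul, ← summable_series.sum_add_tsum_nat_add n]
    congr! 3 with k
    rw [smul_smul, ← pow_add]
    congr 2
    ring

-- `f` is the sum of a series `∑ 2⁻ᵏ⁻¹ • gₖ`, where `gₖ ∈ K k` nearly minimizes the norm of the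
-- partial sum plus `2⁻ᵏ • gₖ`; since the remainder of the series is `2⁻ᵏ • t` with `t ∈ K k`,
-- near-minimality keeps the norms of the partial sums below `‖f‖` by a definite amount.
theorem exists_forall_norm_add_le_of_antitone (hne : ∀ n, (K n).Nonempty)
    (hclosed : ∀ n, IsClosed (K n)) (hconv : ∀ n, Convex ℝ (K n)) (hanti : Antitone K)
    (hbdd : Bornology.IsBounded (K 0)) {θ : ℝ} (hθ : 0 < θ) (hK : ∀ h ∈ K 0, θ ≤ ‖h‖) :
    ∃ f, ∀ n, ∃ u, ∃ t ∈ K n,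
      f = u + (1 / 2 : ℝ) ^ n • t ∧ ‖u‖ + θ / 2 * (1 / 2) ^ n ≤ ‖f‖ := by
  obtain ⟨g, hgK, hmin⟩ := exists_seq_norm_sum_add_smul_le K hne (fun k ↦ (1 / 2) ^ (k + 1))
    (fun n ↦ (1 / 2) ^ n) (fun n ↦ θ / 4 * ((1 / 2) ^ n) ^ 2) fun n ↦ by positivity
  obtain ⟨f, hf⟩ := exists_eq_sum_add_smul_of_antitone hclosed hconv hanti hbdd hgK
  set u : ℕ → V := fun n ↦ ∑ k ∈ Finset.range n, (1 / 2 : ℝ) ^ (k + 1) • g k with hu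
  have hf₀ : f ∈ K 0 := by
    obtain ⟨t, ht, hft⟩ := hf 0
    simpa [hft] using ht
  have norm_step (n : ℕ) : 2 * ‖u (n + 1)‖ ≤ ‖u n‖ + ‖f‖ + θ / 4 * ((1 / 2) ^ n) ^ 2 := by
    obtain ⟨t, ht, hft⟩ := hf n
    have hsucc : (2 : ℝ) • u (n + 1) = u n + (u n + (1 / 2 : ℝ) ^ n • g n) := by
      simp only [hu, Finset.sum_range_succ, pow_succ]
      module
    calc 2 * ‖u (n + 1)‖ = ‖u n + (u n + (1 / 2 : ℝ) ^ n • g n)‖ := by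
          rw [← hsucc, norm_smul, Real.norm_of_nonneg zero_le_two]
      _ ≤ ‖u n‖ + ‖u n + (1 / 2 : ℝ) ^ n • g n‖ := norm_add_le _ _
      _ ≤ ‖u n‖ + (‖f‖ + θ / 4 * ((1 / 2) ^ n) ^ 2) := by grw [hmin n t ht, ← hft]
      _ = _ := by ring
  have gap (n : ℕ) : ‖u n‖ + θ / 2 * ((1 / 2) ^ n + ((1 / 2) ^ n) ^ 2) ≤ ‖f‖ := by
    induction n with
    | zero => simpa [hu, one_add_one_eq_two] using hK f hf₀
    | succ n ih =>
      rw [pow_succ]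
      linarith [norm_step n]
  refine ⟨f, fun n ↦ ?_⟩
  obtain ⟨t, ht, hft⟩ := hf n
  refine ⟨u n, t, ht, hft, ?_⟩
  have := gap n
  have : 0 ≤ θ / 2 * ((1 / 2) ^ n) ^ 2 := by positivity
  linarith

end NearMinimization

section James

variable {𝕜 E : Type*} [RCLike 𝕜] [NormedAddCommGroup E] [NormedSpace 𝕜 E]

theorem norm_apply_le_of_mem_closedConvexHull {S : Set (StrongDual 𝕜 E)} {x : E} {c : ℝ}
    (hS : ∀ g ∈ S, ‖g x‖ ≤ c) {f : StrongDual 𝕜 E} (hf : f ∈ closedConvexHull ℝ S) :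
    ‖f x‖ ≤ c := by
  let ev : StrongDual 𝕜 E →L[ℝ] 𝕜 := (ContinuousLinearMap.apply 𝕜 𝕜 x).restrictScalars ℝ
  have hmem (h : StrongDual 𝕜 E) : h ∈ ev ⁻¹' closedBall 0 c ↔ ‖h x‖ ≤ c := mem_closedBall_zero_iff
  refine (hmem f).1 (closedConvexHull_min (fun g hg ↦ (hmem g).2 (hS g hg)) ?_ ?_ hf)
  · exact (convex_closedBall _ _).linear_preimage ev.toLinearMap
  · exact isClosed_closedBall.preimage ev.continuous

theorem exists_forall_norm_apply_lt_norm_of_tendsto_zero {g : ℕ → StrongDual 𝕜 E}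
    (hbdd : Bornology.IsBounded (Set.range g)) (hlim : ∀ x, Tendsto (fun n ↦ g n x) atTop (𝓝 0))
    (h₀ : 0 ∉ closedConvexHull ℝ (Set.range g)) :
    ∃ f : StrongDual 𝕜 E, ∀ x, ‖x‖ ≤ 1 → ‖f x‖ < ‖f‖ := by
  let K (n : ℕ) : Set (StrongDual 𝕜 E) := closedConvexHull ℝ (g '' Set.Ici n)
  have hK₀ : K 0 = closedConvexHull ℝ (Set.range g) := by
    simp only [K, ← bot_eq_zero, Set.Ici_bot, Set.image_univ]
  obtain ⟨θ, hθ, hθK⟩ : ∃ θ > 0, ∀ h ∈ K 0, θ ≤ ‖h‖ := by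
    have hne : (K 0).Nonempty := ⟨g 0, subset_closedConvexHull ⟨0, Set.self_mem_Ici, rfl⟩⟩
    have h₀K : 0 ∉ K 0 := by rwa [hK₀]
    refine ⟨infDist 0 (K 0),
      (isClosed_closedConvexHull.notMem_iff_infDist_pos hne).1 h₀K, fun h hh ↦ ?_⟩
    simpa using infDist_le_dist_of_mem (x := 0) hh
  have hKbdd : Bornology.IsBounded (K 0) := by
    rw [hK₀, closedConvexHull_eq_closure_convexHull]
    exact (isBounded_convexHull.2 hbdd).closure
  obtain ⟨f, hf⟩ := exists_forall_norm_add_le_of_antitone (K := K)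
    (fun n ↦ ⟨g n, subset_closedConvexHull ⟨n, Set.self_mem_Ici, rfl⟩⟩)
    (fun n ↦ isClosed_closedConvexHull) (fun n ↦ convex_closedConvexHull)
    (fun m n hmn ↦ (closedConvexHull ℝ).monotone (Set.image_mono (Set.Ici_subset_Ici.2 hmn)))
    hKbdd hθ hθK
  refine ⟨f, fun x hx ↦ ?_⟩
  obtain ⟨n, hn⟩ := eventually_atTop.1 <|
    (tendsto_zero_iff_norm_tendsto_zero.1 (hlim x)).eventually_le_const (show 0 < θ / 4 by linarith)
  obtain ⟨u, t, ht, rfl, hu⟩ := hf n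
  calc ‖(u + (1 / 2 : ℝ) ^ n • t) x‖ ≤ ‖u x‖ + ‖((1 / 2 : ℝ) ^ n • t) x‖ := norm_add_le _ _
    _ = ‖u x‖ + (1 / 2) ^ n * ‖t x‖ := by
      rw [smul_apply, norm_smul, Real.norm_of_nonneg (by positivity)]
    _ ≤ ‖u‖ + (1 / 2) ^ n * (θ / 4) := by
      gcongr
      · exact u.unit_le_opNorm x hx
      · exact norm_apply_le_of_mem_closedConvexHull (Set.forall_mem_image.2 hn) ht
    _ < ‖u‖ + θ / 2 * (1 / 2) ^ n := by
      have : 0 < θ * (1 / 2 : ℝ) ^ n := by positivity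
      linarith
    _ ≤ _ := hu

end James

section Duality

open NormedSpace StrongDual

variable {𝕜 X : Type*} [RCLike 𝕜]

section Seminormed

variable [SeminormedAddCommGroup X] [NormedSpace 𝕜 X]

theorem norm_mkQ_eq_infDist (A : Submodule 𝕜 X) (x : X) : ‖A.mkQ x‖ = infDist x (A : Set X) :=
  QuotientAddGroup.norm_mk (S := A.toAddSubgroup) x

theorem infDist_add_of_mem (A : Submodule 𝕜 X) (x : X) {y : X} (hy : y ∈ A) :
    infDist (x + y) (A : Set X) = infDist x (A : Set X) := by
  have hmkQ : A.mkQ y = 0 := (Submodule.Quotient.mk_eq_zero A).2 hy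
  rw [← norm_mkQ_eq_infDist, ← norm_mkQ_eq_infDist, map_add, hmkQ, add_zero]

theorem exists_mem_polarSubmodule_apply_eq_infDist (A : Submodule 𝕜 X) (x : X) :
    ∃ g ∈ polarSubmodule 𝕜 A, ‖g‖ ≤ 1 ∧ g x = infDist x (A : Set X) := by
  obtain ⟨g, hg, hgx⟩ := exists_dual_vector'' 𝕜 (A.mkQ x)
  refine ⟨g.comp A.mkQL, ?_, ?_, ?_⟩
  · refine (mem_polarSubmodule 𝕜 A _).2 fun a ha ↦ ?_
    have hmkQ : A.mkQ a = 0 := (Submodule.Quotient.mk_eq_zero A).2 ha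
    exact (congrArg g hmkQ).trans (map_zero g)
  · refine ContinuousLinearMap.opNorm_le_bound _ zero_le_one fun y ↦ ?_
    calc ‖g (A.mkQ y)‖ ≤ 1 * ‖A.mkQ y‖ := g.le_of_opNorm_le hg _
      _ ≤ 1 * ‖y‖ := by gcongr; exact Submodule.Quotient.norm_mk_le A y
  · rw [← norm_mkQ_eq_infDist]
    exact hgx

theorem norm_apply_le_norm_mul_infDist {A : Submodule 𝕜 X} {g : StrongDual 𝕜 X}
    (hg : g ∈ polarSubmodule 𝕜 A) (x : X) : ‖g x‖ ≤ ‖g‖ * infDist x (A : Set X) := by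
  rw [mem_polarSubmodule] at hg
  rcases (norm_nonneg g).eq_or_lt' with hg₀ | hg₀
  · simpa [hg₀] using g.le_opNorm x
  rw [← div_le_iff₀' hg₀, le_infDist ⟨0, A.zero_mem⟩]
  intro y hy
  rw [div_le_iff₀' hg₀, dist_eq_norm]
  calc ‖g x‖ = ‖g (x - y)‖ := by rw [map_sub, hg y hy, sub_zero]
    _ ≤ ‖g‖ * ‖x - y‖ := g.le_opNorm _

theorem exists_norm_add_smul_eq {b x : X} (hb : ‖b‖ ≠ 0) {t : ℝ} (hx : ‖x‖ ≤ t) :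
    ∃ c : 𝕜, ‖x + c • b‖ = t := by
  have hcont : Continuous fun s : ℝ ↦ ‖x + (s : 𝕜) • b‖ := by fun_prop
  have large : t ≤ ‖x + (((t + ‖x‖) / ‖b‖ : ℝ) : 𝕜) • b‖ := by
    have : 0 < ‖b‖ := (norm_nonneg b).lt_of_ne' hb
    have : 0 ≤ t := (norm_nonneg x).trans hx
    calc t = (t + ‖x‖) / ‖b‖ * ‖b‖ - ‖x‖ := by field_simp; ring
      _ = ‖(((t + ‖x‖) / ‖b‖ : ℝ) : 𝕜) • b‖ - ‖x‖ := by
        rw [norm_smul, RCLike.norm_of_nonneg (by positivity)]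
      _ ≤ _ := by
        rw [add_comm x]
        exact norm_sub_le_norm_add _ _
  obtain ⟨s, hs⟩ := mem_range_of_exists_le_of_exists_ge hcont ⟨0, by simpa using hx⟩ ⟨_, large⟩
  exact ⟨s, hs⟩

theorem infDist_ker_mul_norm_le (p : StrongDual 𝕜 X) (w z : X) :
    infDist w (p.ker : Set X) * ‖p z‖ ≤ ‖p w‖ * ‖z‖ := by
  rcases eq_or_ne (p z) 0 with hz | hz
  · rw [hz, norm_zero, mul_zero]
    positivity
  have hker : w - (p w / p z) • z ∈ p.ker := by
    rw [LinearMap.mem_ker]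
    simp [hz]
  calc infDist w (p.ker : Set X) * ‖p z‖ ≤ dist w (w - (p w / p z) • z) * ‖p z‖ := by
        gcongr
        exact infDist_le_dist_of_mem hker
    _ = ‖p w‖ * ‖z‖ := by
      rw [dist_eq_norm, sub_sub_cancel, norm_smul, norm_div]
      field_simp

theorem norm_apply_eq_norm_of_one_le_infDist_ker {p : StrongDual 𝕜 X} {w : X} (hw : ‖w‖ = 1)
    (hdist : 1 ≤ infDist w (p.ker : Set X)) : ‖p w‖ = ‖p‖ := by
  refine le_antisymm (p.unit_le_opNorm w hw.le) (p.opNorm_le_bound (norm_nonneg _) fun z ↦ ?_)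
  calc ‖p z‖ ≤ infDist w (p.ker : Set X) * ‖p z‖ := le_mul_of_one_le_left (norm_nonneg _) hdist
    _ ≤ ‖p w‖ * ‖z‖ := infDist_ker_mul_norm_le p w z

end Seminormed

variable [NormedAddCommGroup X] [NormedSpace 𝕜 X]

theorem exists_mem_norm_add_eq_infDist
    (hX : Function.Surjective (inclusionInDoubleDual 𝕜 X)) {A : Submodule 𝕜 X}
    (hA : IsClosed (A : Set X)) (x : X) : ∃ y ∈ A, ‖x + y‖ = infDist x (A : Set X) := by
  obtain ⟨ψ, hψ, hψ_norm⟩ := exists_extension_norm_eq (polarSubmodule 𝕜 A)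
    ((inclusionInDoubleDual 𝕜 X x).comp (polarSubmodule 𝕜 A).subtypeL)
  obtain ⟨z, rfl⟩ := hX ψ
  have apply_eq (g : StrongDual 𝕜 X) (hg : g ∈ polarSubmodule 𝕜 A) : g z = g x := hψ ⟨g, hg⟩
  have hmem : z - x ∈ A := by
    rw [← SetLike.mem_coe, hA.mem_iff_infDist_zero ⟨0, A.zero_mem⟩]
    obtain ⟨g, hgA, -, hgx⟩ := exists_mem_polarSubmodule_apply_eq_infDist A (z - x)
    rw [map_sub, apply_eq g hgA, sub_self] at hgx
    exact_mod_cast hgx.symm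
  refine ⟨z - x, hmem, le_antisymm ?_ ?_⟩
  · calc ‖x + (z - x)‖ = ‖inclusionInDoubleDual 𝕜 X z‖ := by
          rw [add_sub_cancel]
          exact ((inclusionInDoubleDualLi 𝕜).norm_map z).symm
      _ ≤ infDist x (A : Set X) := by
        rw [hψ_norm]
        refine ContinuousLinearMap.opNorm_le_bound _ infDist_nonneg fun g ↦ ?_
        rw [mul_comm]
        exact norm_apply_le_norm_mul_infDist g.2 x
  · rw [← infDist_add_of_mem A x hmem]
    simpa using infDist_le_dist_of_mem (x := x + (z - x)) A.zero_mem

theorem exists_apply_eq_one_of_lt_norm_sub (φ : StrongDual 𝕜 (StrongDual 𝕜 X))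
    (F : Submodule 𝕜 X) [FiniteDimensional 𝕜 F] {d : ℝ} (hd : 0 < d)
    (hF : ∀ x ∈ F, d < ‖φ - inclusionInDoubleDual 𝕜 X x‖) :
    ∃ g ∈ polarSubmodule 𝕜 F, ‖g‖ ≤ d⁻¹ ∧ φ g = 1 := by
  obtain ⟨ψ, hψ, hψ_norm⟩ := exists_extension_norm_eq (polarSubmodule 𝕜 F)
    (φ.comp (polarSubmodule 𝕜 F).subtypeL)
  obtain ⟨x, hxF, hx⟩ : ∃ x ∈ F, inclusionInDoubleDual 𝕜 X x = φ - ψ := by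
    let J : X →ₗ[𝕜] Module.Dual 𝕜 (StrongDual 𝕜 X) :=
      ContinuousLinearMap.coeLM 𝕜 ∘ₗ (inclusionInDoubleDual 𝕜 X).toLinearMap
    have hmem : (φ - ψ).toLinearMap ∈ (F.map J).dualCoannihilator.dualAnnihilator := by
      rw [Submodule.mem_dualAnnihilator]
      intro g hg
      rw [Submodule.mem_dualCoannihilator] at hg
      have hgF : g ∈ polarSubmodule 𝕜 F :=
        (mem_polarSubmodule 𝕜 F g).2 fun x hx ↦ hg (J x) ⟨x, hx, rfl⟩
      exact sub_eq_zero.2 (hψ ⟨g, hgF⟩).symm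
    rw [Subspace.dualCoannihilator_dualAnnihilator_eq] at hmem
    obtain ⟨x, hxF, hx⟩ := hmem
    exact ⟨x, hxF, ContinuousLinearMap.coe_injective hx⟩
  have norm_lt : d < ‖ψ‖ := by
    rw [← sub_sub_cancel φ ψ, ← hx]
    exact hF x hxF
  rw [hψ_norm] at norm_lt
  obtain ⟨g, hg, hφg⟩ := ContinuousLinearMap.exists_lt_apply_of_lt_opNorm _ norm_lt
  have hφg : d < ‖φ g‖ := hφg
  refine ⟨(φ g)⁻¹ • (g : StrongDual 𝕜 X), Submodule.smul_mem _ _ g.2, ?_, ?_⟩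
  · rw [norm_smul, norm_inv]
    exact (mul_le_of_le_one_right (by positivity) hg.le).trans (inv_anti₀ hd hφg.le)
  · rw [map_smul, smul_eq_mul, inv_mul_cancel₀ (norm_pos_iff.1 (hd.trans hφg))]

theorem exists_norm_lt_forall_mem_apply_eq {φ : StrongDual 𝕜 (StrongDual 𝕜 X)} {r : ℝ}
    (hφ : ‖φ‖ < r) (M : Submodule 𝕜 (StrongDual 𝕜 X)) [FiniteDimensional 𝕜 M] :
    ∃ x, ‖x‖ < r ∧ ∀ f ∈ M, f x = φ f := by
  let ι : StrongDual 𝕜 X →ₗ[𝕜] Module.Dual 𝕜 X := ContinuousLinearMap.coeLM 𝕜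
  have hι : Function.Injective ι := ContinuousLinearMap.coe_injective
  let B : M →ₗ[𝕜] X →ₗ[𝕜] 𝕜 := ι ∘ₗ M.subtype
  have hB : Function.Injective B := hι.comp M.injective_subtype
  have hB_flip : Function.Surjective B.flip :=
    (LinearMap.flip_surjective_iff₁ (V₁ := M) (B := B)).2 hB
  obtain ⟨x, hx⟩ := hB_flip (φ.toLinearMap ∘ₗ M.subtype)
  replace hx (f) (hf : f ∈ M) : f x = φ f := LinearMap.congr_fun hx ⟨f, hf⟩
  obtain ⟨g, hg, hg_norm, hgx⟩ :=
    exists_mem_polarSubmodule_apply_eq_infDist (M.map ι).dualCoannihilator x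
  have hgM : g ∈ M := by
    have : ι g ∈ (M.map ι).dualCoannihilator.dualAnnihilator :=
      (Submodule.mem_dualAnnihilator _).2 ((mem_polarSubmodule 𝕜 _ g).1 hg)
    rw [Subspace.dualCoannihilator_dualAnnihilator_eq] at this
    obtain ⟨g', hg', h⟩ := this
    exact hι h ▸ hg'
  have hdist : infDist x ((M.map ι).dualCoannihilator : Set X) < r := by
    calc infDist x _ = ‖φ g‖ := by rw [← hx g hgM, hgx, RCLike.norm_of_nonneg infDist_nonneg]
      _ ≤ ‖φ‖ := φ.unit_le_opNorm g hg_norm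
      _ < r := hφ
  obtain ⟨k, hk, hxk⟩ := (infDist_lt_iff ⟨0, zero_mem _⟩).1 hdist
  refine ⟨x - k, by rwa [← dist_eq_norm], fun f hf ↦ ?_⟩
  have : f k = 0 := (Submodule.mem_dualCoannihilator _).1 hk (ι f) ⟨f, hf, rfl⟩
  rw [map_sub, this, sub_zero, hx f hf]

end Duality

section JamesSystem

open NormedSpace StrongDual Submodule

variable {𝕜 X : Type*} [RCLike 𝕜] [NormedAddCommGroup X] [NormedSpace 𝕜 X]

/-- A bounded triangular system of functionals and vectors, `f n (x k)` being `1` for `n ≤ k` and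
`0` for `k < n`: James' witness of non-reflexivity. -/
structure IsJamesSystem (f : ℕ → StrongDual 𝕜 X) (x : ℕ → X) : Prop where
  isBounded_range_functional : Bornology.IsBounded (Set.range f)
  isBounded_range_vector : Bornology.IsBounded (Set.range x)
  apply_eq_one : ∀ {n k}, n ≤ k → f n (x k) = 1
  apply_eq_zero : ∀ {n k}, k < n → f n (x k) = 0

theorem exists_functional_vector_of_finite {φ : StrongDual 𝕜 (StrongDual 𝕜 X)} {d : ℝ} (hd : 0 < d)
    (hφ : ∀ x, d < ‖φ - inclusionInDoubleDual 𝕜 X x‖) {G : Set (StrongDual 𝕜 X)} (hG : G.Finite)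
    {Y : Set X} (hY : Y.Finite) :
    ∃ (g : StrongDual 𝕜 X) (y : X), (‖g‖ ≤ d⁻¹ ∧ ‖y‖ ≤ ‖φ‖ + 1 ∧ φ g = 1 ∧ g y = 1) ∧
      (∀ x ∈ Y, g x = 0) ∧ ∀ f ∈ G, f y = φ f := by
  have : FiniteDimensional 𝕜 (span 𝕜 Y) := .span_of_finite 𝕜 hY
  obtain ⟨g, hgY, hg, hφg⟩ := exists_apply_eq_one_of_lt_norm_sub φ (span 𝕜 Y) hd fun x _ ↦ hφ x
  have : FiniteDimensional 𝕜 (span 𝕜 (insert g G)) := .span_of_finite 𝕜 (hG.insert g)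
  obtain ⟨y, hy, hyG⟩ :=
    exists_norm_lt_forall_mem_apply_eq (lt_add_one ‖φ‖) (span 𝕜 (insert g G))
  have hgy : g y = 1 := (hyG g (subset_span (Set.mem_insert _ _))).trans hφg
  exact ⟨g, y, ⟨hg, hy.le, hφg, hgy⟩,
    fun x hx ↦ (mem_polarSubmodule 𝕜 _ g).1 hgY x (subset_span hx),
    fun f hf ↦ hyG f (subset_span (.inr hf))⟩

theorem exists_isJamesSystem_of_not_surjective [CompleteSpace X]
    (hX : ¬Function.Surjective (inclusionInDoubleDual 𝕜 X)) :
    ∃ (f : ℕ → StrongDual 𝕜 X) (x : ℕ → X), IsJamesSystem f x := by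
  obtain ⟨φ, hφ⟩ := not_forall.1 hX
  obtain ⟨d, hd, hφd⟩ : ∃ d > 0, ∀ x, d < ‖φ - inclusionInDoubleDual 𝕜 X x‖ := by
    have hisom : Isometry (inclusionInDoubleDual 𝕜 X) := (inclusionInDoubleDualLi 𝕜).isometry
    have hpos := (hisom.isClosedEmbedding.isClosed_range.notMem_iff_infDist_pos
      (Set.range_nonempty _)).1 hφ
    exact ⟨_, half_pos hpos, fun x ↦ (half_lt_self hpos).trans_le <|
      (infDist_le_dist_of_mem (Set.mem_range_self x)).trans_eq (dist_eq_norm _ _)⟩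
  obtain ⟨q, hq, hqq⟩ := exists_seq_of_forall_finset_exists
    (fun q : StrongDual 𝕜 X × X ↦ ‖q.1‖ ≤ d⁻¹ ∧ ‖q.2‖ ≤ ‖φ‖ + 1 ∧ φ q.1 = 1 ∧ q.1 q.2 = 1)
    (fun p q ↦ q.1 p.2 = 0 ∧ p.1 q.2 = 1) fun s hs ↦ by
      obtain ⟨g, y, hgy, hg, hy⟩ := exists_functional_vector_of_finite hd hφd
        (s.finite_toSet.image Prod.fst) (s.finite_toSet.image Prod.snd)
      exact ⟨(g, y), hgy, fun p hp ↦
        ⟨hg _ ⟨p, hp, rfl⟩, (hy _ ⟨p, hp, rfl⟩).trans (hs p hp).2.2.1⟩⟩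
  refine ⟨fun n ↦ (q n).1, fun n ↦ (q n).2, ⟨?_, ?_, fun {n k} hnk ↦ ?_, fun hkn ↦ (hqq _ _ hkn).1⟩⟩
  · exact isBounded_iff_forall_norm_le.2 ⟨_, Set.forall_mem_range.2 fun n ↦ (hq n).1⟩
  · exact isBounded_iff_forall_norm_le.2 ⟨_, Set.forall_mem_range.2 fun n ↦ (hq n).2.1⟩
  · rcases hnk.eq_or_lt with rfl | hlt
    exacts [(hq n).2.2.2, (hqq _ _ hlt).2]

namespace IsJamesSystem

variable {f : ℕ → StrongDual 𝕜 X} {x : ℕ → X}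

theorem comp_strictMono (h : IsJamesSystem f x) {σ : ℕ → ℕ} (hσ : StrictMono σ) :
    IsJamesSystem (f ∘ σ) (x ∘ σ) where
  isBounded_range_functional :=
    h.isBounded_range_functional.subset (Set.range_comp_subset_range _ _)
  isBounded_range_vector :=
    h.isBounded_range_vector.subset (Set.range_comp_subset_range _ _)
  apply_eq_one hnk := h.apply_eq_one (hσ.monotone hnk)
  apply_eq_zero hkn := h.apply_eq_zero (hσ hkn)

theorem restrict (h : IsJamesSystem f x) {W : Submodule 𝕜 X} (hW : ∀ n, x n ∈ W) :
    IsJamesSystem (fun n ↦ (f n).comp W.subtypeL) (fun n ↦ (⟨x n, hW n⟩ : W)) where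
  isBounded_range_functional := by
    obtain ⟨M, hM⟩ := isBounded_iff_forall_norm_le.1 h.isBounded_range_functional
    refine isBounded_iff_forall_norm_le.2 ⟨M, Set.forall_mem_range.2 fun n ↦ ?_⟩
    have hfn : ‖f n‖ ≤ M := hM _ ⟨n, rfl⟩
    exact ContinuousLinearMap.opNorm_le_bound _ ((norm_nonneg _).trans hfn)
      fun w ↦ (f n).le_of_opNorm_le hfn w
  isBounded_range_vector := by
    obtain ⟨M, hM⟩ := isBounded_iff_forall_norm_le.1 h.isBounded_range_vector
    exact isBounded_iff_forall_norm_le.2 ⟨M, Set.forall_mem_range.2 fun n ↦ hM _ ⟨n, rfl⟩⟩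
  apply_eq_one := h.apply_eq_one
  apply_eq_zero := h.apply_eq_zero

theorem tendsto_zero (h : IsJamesSystem f x) {w : X}
    (hw : w ∈ (span 𝕜 (Set.range x)).topologicalClosure) :
    Tendsto (fun n ↦ f n w) atTop (𝓝 0) := by
  obtain ⟨M, hM⟩ := isBounded_iff_forall_norm_le.1 h.isBounded_range_functional
  have hequi : Equicontinuous fun n ↦ ⇑(f n) :=
    (LipschitzWith.uniformEquicontinuous _ M.toNNReal fun n ↦ (f n).lipschitz.weaken <|
      NNReal.le_toNNReal_of_coe_le (hM _ ⟨n, rfl⟩)).equicontinuous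
  have hclosed : IsClosed {w | Tendsto (fun n ↦ f n w) atTop (𝓝 0)} :=
    hequi.isClosed_setOfPred_tendsto continuous_const
  refine closure_minimal (fun v hv ↦ ?_) hclosed hw
  induction hv using span_induction with
  | mem v hv =>
    obtain ⟨k, rfl⟩ := hv
    refine tendsto_const_nhds.congr' ?_
    filter_upwards [eventually_gt_atTop k] with n hn using (h.apply_eq_zero hn).symm
  | zero => simp
  | add v w _ _ hv hw => simpa using hv.add hw
  | smul c v _ hv => simpa using hv.const_smul c

theorem zero_notMem_closedConvexHull (h : IsJamesSystem f x) :
    0 ∉ closedConvexHull ℝ (Set.range f) := by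
  obtain ⟨R, hR⟩ := isBounded_iff_forall_norm_le.1 h.isBounded_range_vector
  have eventually_one : convexHull ℝ (Set.range f) ⊆ {g | ∀ᶠ k in atTop, g (x k) = 1} := by
    refine convexHull_min ?_ fun g hg g' hg' a b _ _ hab ↦ ?_
    · rintro _ ⟨n, rfl⟩
      filter_upwards [eventually_ge_atTop n] with k hk using h.apply_eq_one hk
    · filter_upwards [hg, hg'] with k hk hk'
      rw [add_apply, smul_apply, smul_apply, hk, hk', ← add_smul, hab, one_smul]
  have norm_bound : closedConvexHull ℝ (Set.range f) ⊆ {g | 1 ≤ ‖g‖ * R} := by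
    rw [closedConvexHull_eq_closure_convexHull]
    refine closure_minimal (fun g hg ↦ ?_) (isClosed_le (by fun_prop) (by fun_prop))
    obtain ⟨k, hk⟩ := (eventually_one hg).exists
    calc 1 = ‖g (x k)‖ := by rw [hk, norm_one]
      _ ≤ ‖g‖ * R := g.le_of_opNorm_le_of_le le_rfl (hR _ ⟨k, rfl⟩)
  intro h₀
  have : (1 : ℝ) ≤ ‖(0 : StrongDual 𝕜 X)‖ * R := norm_bound h₀
  rw [norm_zero, zero_mul] at this
  exact this.not_gt one_pos

theorem exists_forall_norm_apply_lt_norm (h : IsJamesSystem f x) :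
    ∃ p : StrongDual 𝕜 (span 𝕜 (Set.range x)).topologicalClosure, ∀ w, ‖w‖ ≤ 1 → ‖p w‖ < ‖p‖ := by
  have hres := h.restrict fun n ↦ le_topologicalClosure _ (subset_span (Set.mem_range_self n))
  exact exists_forall_norm_apply_lt_norm_of_tendsto_zero hres.isBounded_range_functional
    (fun w ↦ h.tendsto_zero w.2) hres.zero_notMem_closedConvexHull

theorem strictMono_topologicalClosure_span_image (h : IsJamesSystem f x) :
    StrictMono fun S : Set ℕ ↦ (span 𝕜 (x '' S)).topologicalClosure := by
  intro S T hST
  obtain ⟨n, hnT, hnS⟩ := Set.exists_of_ssubset hST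
  have hS : (span 𝕜 (x '' S)).topologicalClosure ≤ (f n - f (n + 1)).ker := by
    refine topologicalClosure_minimal _ (span_le.2 ?_) (f n - f (n + 1)).isClosed_ker
    rintro _ ⟨k, hk, rfl⟩
    rw [SetLike.mem_coe, LinearMap.mem_ker]
    rcases lt_or_gt_of_ne (ne_of_mem_of_not_mem hk hnS) with hkn | hnk
    · simp [h.apply_eq_zero hkn, h.apply_eq_zero (hkn.trans n.lt_succ_self)]
    · simp [h.apply_eq_one hnk.le, h.apply_eq_one hnk.nat_succ_le]
  refine lt_of_le_not_ge (topologicalClosure_mono (span_mono (Set.image_mono hST.le))) fun hTS ↦ ?_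
  have hker := hS (hTS (le_topologicalClosure _ (subset_span ⟨n, hnT, rfl⟩)))
  simp [h.apply_eq_one le_rfl, h.apply_eq_zero n.lt_succ_self] at hker

theorem exists_strictMono_forall_norm_apply_lt_norm (h : IsJamesSystem f x) :
    ∃ Z : ℕ → Submodule 𝕜 X, (∀ n, IsClosed (Z n : Set X)) ∧ StrictMono Z ∧
      ∃ p : StrongDual 𝕜 (Z 0), ∀ w, ‖w‖ ≤ 1 → ‖p w‖ < ‖p‖ := by
  let S (n : ℕ) : Set ℕ := Set.range (2 * ·) ∪ Set.Iio (2 * n)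
  have hS : StrictMono S := strictMono_nat_of_lt_succ fun n ↦ by
    have hodd : 2 * n + 1 ∉ S n := by
      simp only [S, Set.mem_union, Set.mem_range, Set.mem_Iio]
      omega
    refine Set.ssubset_iff_exists.2 ⟨?_, 2 * n + 1, .inr (Set.mem_Iio.2 (by omega)), hodd⟩
    exact Set.union_subset_union_right _ (Set.Iio_subset_Iio (by omega))
  have hS₀ : x '' S 0 = Set.range (x ∘ (2 * ·)) := by simp [S, Set.range_comp]
  refine ⟨fun n ↦ (span 𝕜 (x '' S n)).topologicalClosure, fun n ↦ isClosed_topologicalClosure _,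
    h.strictMono_topologicalClosure_span_image.comp hS, ?_⟩
  beta_reduce
  rw [hS₀]
  exact (h.comp_strictMono (strictMono_mul_left_of_pos two_pos)).exists_forall_norm_apply_lt_norm

end IsJamesSystem

end JamesSystem

section PropertyBf

open NormedSpace

variable {𝕜 X : Type*} [RCLike 𝕜] [NormedAddCommGroup X] [NormedSpace 𝕜 X]

/-- Property (B_f): along every strictly increasing sequence of closed subspaces starting at `0`,
each finite non-increasing sequence of distances is attained, followed by zeros. Of `e : ℕ → ℝ`
only the values `e 0, …, e N` matter. -/
def HasPropertyBf (𝕜 X : Type*) [RCLike 𝕜] [NormedAddCommGroup X] [NormedSpace 𝕜 X] : Prop :=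
  ∀ Y : ℕ → Submodule 𝕜 X, (∀ n, IsClosed (Y n : Set X)) → Y 0 = ⊥ → (∀ n, Y n < Y (n + 1)) →
    ∀ N : ℕ, ∀ e : ℕ → ℝ, (∀ n ≤ N, 0 ≤ e n) → (∀ n < N, e (n + 1) ≤ e n) →
      ∃ x : X, (∀ n ≤ N, infDist x (Y n : Set X) = e n) ∧
        ∀ n > N, infDist x (Y n : Set X) = 0

namespace HasPropertyBf

theorem exists_norm_eq_one_infDist_eq_one (h : HasPropertyBf 𝕜 X) {A : Submodule 𝕜 X}
    (hA : IsClosed (A : Set X)) {Z : ℕ → Submodule 𝕜 X} (hZ : ∀ n, IsClosed (Z n : Set X))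
    (hmono : StrictMono Z) (hAZ : A < Z 0) :
    ∃ x ∈ Z 0, ‖x‖ = 1 ∧ infDist x (A : Set X) = 1 := by
  rcases eq_or_ne A ⊥ with rfl | hA₀
  · obtain ⟨v, hv, hv₀⟩ := Submodule.exists_mem_ne_zero_of_ne_bot hAZ.ne'
    have hnorm : ‖((‖v‖⁻¹ : ℝ) : 𝕜) • v‖ = 1 := by
      rw [norm_smul]
      simp [hv₀]
    refine ⟨_, (Z 0).smul_mem _ hv, hnorm, ?_⟩
    rw [Submodule.bot_coe, infDist_singleton, dist_zero_right, hnorm]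
  let Y : ℕ → Submodule 𝕜 X
    | 0 => ⊥
    | 1 => A
    | n + 2 => Z n
  obtain ⟨x, hx, hx₀⟩ := h Y
    (by rintro (_ | _ | n); exacts [isClosed_singleton, hA, hZ n]) rfl
    (by rintro (_ | _ | n); exacts [bot_lt_iff_ne_bot.2 hA₀, hAZ, hmono n.lt_succ_self])
    1 (fun _ ↦ 1) (fun _ _ ↦ zero_le_one) fun _ _ ↦ le_rfl
  refine ⟨x, ?_, ?_, hx 1 le_rfl⟩
  · exact ((hZ 0).mem_iff_infDist_zero ⟨0, (Z 0).zero_mem⟩).2 (hx₀ 2 one_lt_two)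
  · simpa [Y] using hx 0 zero_le_one

theorem exists_norm_apply_eq_norm (h : HasPropertyBf 𝕜 X) {Z : ℕ → Submodule 𝕜 X}
    (hZ : ∀ n, IsClosed (Z n : Set X)) (hmono : StrictMono Z) (p : StrongDual 𝕜 (Z 0)) :
    ∃ w, ‖w‖ ≤ 1 ∧ ‖p w‖ = ‖p‖ := by
  rcases eq_or_ne p 0 with rfl | hp
  · exact ⟨0, by simp⟩
  let A : Submodule 𝕜 X := p.ker.map (Z 0).subtype
  have hA : IsClosed (A : Set X) :=
    (hZ 0).isClosedEmbedding_subtypeVal.isClosedMap _ p.isClosed_ker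
  have hAZ : A < Z 0 := by
    obtain ⟨z, hz⟩ := DFunLike.ne_iff.1 hp
    refine SetLike.lt_iff_le_and_exists.2 ⟨Submodule.map_subtype_le _ _, (z : X), z.2, ?_⟩
    rintro ⟨z', hz', h⟩
    exact hz (Subtype.ext h ▸ hz')
  obtain ⟨x, hxZ, hx, hdist⟩ := h.exists_norm_eq_one_infDist_eq_one hA hZ hmono hAZ
  have hdist_ker : infDist (⟨x, hxZ⟩ : Z 0) (p.ker : Set (Z 0)) = 1 := by
    rw [← hdist, ← infDist_image (Z 0).subtypeₗᵢ.isometry]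
    rfl
  exact ⟨⟨x, hxZ⟩, hx.le, norm_apply_eq_norm_of_one_le_infDist_ker hx hdist_ker.ge⟩

theorem surjective_inclusionInDoubleDual [CompleteSpace X] (h : HasPropertyBf 𝕜 X) :
    Function.Surjective (inclusionInDoubleDual 𝕜 X) := by
  by_contra hX
  obtain ⟨f, x, hfx⟩ := exists_isJamesSystem_of_not_surjective hX
  obtain ⟨Z, hZ, hmono, p, hp⟩ := hfx.exists_strictMono_forall_norm_apply_lt_norm
  obtain ⟨w, hw, hpw⟩ := h.exists_norm_apply_eq_norm hZ hmono p
  exact (hp w hw).ne hpw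

end HasPropertyBf

theorem exists_mem_infDist_add_eq (hX : Function.Surjective (inclusionInDoubleDual 𝕜 X))
    {A B : Submodule 𝕜 X} (hA : IsClosed (A : Set X)) (hB : IsClosed (B : Set X)) (hAB : A < B)
    {x : X} {t : ℝ} (hx : infDist x (B : Set X) ≤ t) :
    ∃ y ∈ B, infDist (x + y) (A : Set X) = t := by
  obtain ⟨y, hy, hxy⟩ := exists_mem_norm_add_eq_infDist hX hB x
  obtain ⟨b, hb, hbA⟩ := SetLike.exists_of_lt hAB
  have hb₀ : ‖A.mkQ b‖ ≠ 0 := by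
    rw [norm_mkQ_eq_infDist]
    exact ((hA.notMem_iff_infDist_pos ⟨0, A.zero_mem⟩).1 hbA).ne'
  have hxyt : ‖A.mkQ (x + y)‖ ≤ t :=
    calc ‖A.mkQ (x + y)‖ ≤ ‖x + y‖ := Submodule.Quotient.norm_mk_le A _
      _ ≤ t := hxy.trans_le hx
  obtain ⟨c, hc⟩ := exists_norm_add_smul_eq (𝕜 := 𝕜) hb₀ hxyt
  refine ⟨y + c • b, B.add_mem hy (B.smul_mem c hb), ?_⟩
  rw [← add_assoc, ← norm_mkQ_eq_infDist, map_add, map_smul, hc]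

theorem exists_mem_forall_infDist_eq (hX : Function.Surjective (inclusionInDoubleDual 𝕜 X))
    {Y : ℕ → Submodule 𝕜 X} (hY : ∀ n, IsClosed (Y n : Set X)) (hmono : StrictMono Y) {N : ℕ}
    {e : ℕ → ℝ} (heN : 0 ≤ e N) (he : ∀ n < N, e (n + 1) ≤ e n) :
    ∃ x ∈ Y (N + 1), ∀ n ≤ N, infDist x (Y n : Set X) = e n := by
  suffices ∀ m ≤ N + 1, ∃ x ∈ Y (N + 1), ∀ n ≤ N, m ≤ n → infDist x (Y n : Set X) = e n by
    simpa using this 0 (Nat.zero_le _)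
  intro m hm
  induction hm using Nat.decreasingInduction with
  | self => exact ⟨0, zero_mem _, fun n hn hn' ↦ absurd hn' (Nat.lt_succ_of_le hn).not_ge⟩
  | of_succ m hm ih =>
    obtain ⟨x, hxN, hx⟩ := ih
    have hle : infDist x (Y (m + 1) : Set X) ≤ e m := by
      rcases (Nat.lt_succ_iff.1 hm).eq_or_lt with rfl | hlt
      · rwa [infDist_zero_of_mem hxN]
      · exact (hx _ hlt le_rfl).trans_le (he m hlt)
    obtain ⟨y, hy, hxy⟩ := exists_mem_infDist_add_eq hX (hY m) (hY (m + 1))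
      (hmono m.lt_succ_self) hle
    refine ⟨x + y, add_mem hxN (hmono.monotone hm hy), fun n hnN hmn ↦ ?_⟩
    rcases hmn.eq_or_lt with rfl | hlt
    · exact hxy
    · rw [infDist_add_of_mem _ _ (hmono.monotone hlt hy), hx n hnN hlt]

theorem hasPropertyBf_of_surjective (hX : Function.Surjective (inclusionInDoubleDual 𝕜 X)) :
    HasPropertyBf 𝕜 X := by
  intro Y hY _ hlt N e he₀ he
  have hmono := strictMono_nat_of_lt_succ hlt
  obtain ⟨x, hxN, hx⟩ := exists_mem_forall_infDist_eq hX hY hmono (he₀ N le_rfl) he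
  exact ⟨x, hx, fun n hn ↦ infDist_zero_of_mem (hmono.monotone hn hxN)⟩

end PropertyBf

theorem stmt_9_general (𝕜 X : Type*) [RCLike 𝕜] [NormedAddCommGroup X] [NormedSpace 𝕜 X]
    [CompleteSpace X] :
    HasPropertyBf 𝕜 X ↔ Function.Surjective (NormedSpace.inclusionInDoubleDual 𝕜 X) :=
  ⟨fun h ↦ h.surjective_inclusionInDoubleDual, hasPropertyBf_of_surjective⟩

/-- Nikol'skii's theorem: a Banach space has property (B_f) if and only if it is reflexive. -/
theorem stmt_9 (X : Type*) [NormedAddCommGroup X] [NormedSpace ℝ X] [CompleteSpace X] :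
    (∀ Y : ℕ → Submodule ℝ X, (∀ n, IsClosed (Y n : Set X)) → Y 0 = ⊥ →
      (∀ n, Y n < Y (n + 1)) →
      ∀ N : ℕ, ∀ e : ℕ → ℝ, (∀ n ≤ N, 0 ≤ e n) → (∀ n < N, e (n + 1) ≤ e n) →
        ∃ x : X, (∀ n ≤ N, infDist x (Y n : Set X) = e n) ∧
          ∀ n > N, infDist x (Y n : Set X) = 0) ↔
      Function.Surjective (NormedSpace.inclusionInDoubleDual ℝ X) :=
  stmt_9_general ℝ X
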